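/- arXiv:math/0504481 — 2 statements merged into one kernel-verified Lean document; each statement's English description precedes it below -/
import Mathlib

section
/- For all n ≥ 1, T > 0 and C₁, C₂, M > 0 there exists K > 0 with the following property. Let g = (g^{αβ}) be a C¹ field of symmetric n×n matrices on an open neighborhood of [−T,T] × ℝⁿ with C₁·Id ≤ g(t,x) ≤ C₂·Id and all first-order partial derivatives of the g^{αβ} bounded in absolute value by M; let b⁰, b¹,…,bⁿ, c : [−T,T] × ℝⁿ → ℝ be measurable with absolute value bounded by M; let f : [−T,T] × ℝⁿ → ℝ be continuous with τ ↦ ‖f(τ,·)‖_{L²(ℝⁿ)} integrable on [−T,T]; let v be C² on a neighborhood of [−T,T] × ℝⁿ, vanishing for |x| ≥ R for some R > 0, and satisfying ∂_t²v − Σ ∂_α(g^{αβ}∂_β v) + b⁰∂_t v + Σ b^α∂_α v + c v = f on [−T,T] × ℝⁿ. Then for all s, t ∈ [−T,T]: E(t,v)^{1/2} ≤ e^{K|t−s|}·(E(s,v)^{1/2} + ∫_{min(s,t)}^{max(s,t)} ‖f(τ,·)‖_{L²(ℝⁿ)} dτ). -/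
open MeasureTheory

/-- Time partial derivative `∂_t u` of a function on `ℝ × ℝⁿ`. -/
noncomputable def Dt {n : ℕ} (u : ℝ × (Fin n → ℝ) → ℝ) (p : ℝ × (Fin n → ℝ)) : ℝ :=
  fderiv ℝ u p (1, 0)

/-- Spatial partial derivative `∂_α u` of a function on `ℝ × ℝⁿ`. -/
noncomputable def Dx {n : ℕ} (α : Fin n) (u : ℝ × (Fin n → ℝ) → ℝ)
    (p : ℝ × (Fin n → ℝ)) : ℝ :=
  fderiv ℝ u p (0, Pi.single α 1)

/-- The energy at time `t` of `v` for the time-dependent metric `g`. -/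
noncomputable def energy {n : ℕ} (g : Fin n → Fin n → ℝ × (Fin n → ℝ) → ℝ)
    (v : ℝ × (Fin n → ℝ) → ℝ) (t : ℝ) : ℝ :=
  ∫ x : Fin n → ℝ,
    ((Dt v (t, x)) ^ 2 + (∑ α, ∑ β, g α β (t, x) * Dx α v (t, x) * Dx β v (t, x))
      + (v (t, x)) ^ 2)

/-!
The time derivative of the energy density is twice the spatial divergence of `∂_t v • g∇v` plus a
production term in which second derivatives of `v` occur only through the wave operator. The
divergence integrates to zero. Solving the equation for the wave operator, the bounds on the
coefficients, ellipticity and Cauchy–Schwarz in `x` give `|E'| ≤ 2 K E + 2 √E ‖f‖_{L²}`, that is,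
`|(√E)'| ≤ K √E + ‖f‖_{L²}`, and Grönwall's inequality in both time directions concludes.
-/

section Gronwall

open Set

variable {y y' E E' F : ℝ → ℝ} {a b s t K : ℝ}

theorem le_exp_mul_add_integral_of_deriv_le (hK : 0 ≤ K) (hab : a ≤ b)
    (hy : ContinuousOn y (Icc a b)) (hy' : ∀ r ∈ Ioo a b, HasDerivAt y (y' r) r)
    (hF : IntegrableOn F (Icc a b)) (hF₀ : ∀ r ∈ Ioo a b, 0 ≤ F r)
    (hle : ∀ r ∈ Ioo a b, y' r ≤ K * y r + F r) :
    y b ≤ Real.exp (K * (b - a)) * (y a + ∫ r in a..b, F r) := by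
  have hexp (r : ℝ) : HasDerivAt (fun r => Real.exp (-(K * (r - a))))
      (Real.exp (-(K * (r - a))) * (-(K * 1))) r :=
    (((hasDerivAt_id r).sub_const a).const_mul K).neg.exp
  have hweighted : Real.exp (-(K * (b - a))) * y b - Real.exp (-(K * (a - a))) * y a
      ≤ ∫ r in a..b, F r := by
    refine intervalIntegral.sub_le_integral_of_hasDeriv_right_of_le hab
      (ContinuousOn.mul (by fun_prop) hy)
      (fun r hr => ((hexp r).mul (hy' r hr)).hasDerivWithinAt) hF fun r hr => ?_
    have hdecay : Real.exp (-(K * (r - a))) ≤ 1 :=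
      Real.exp_le_one_iff.2 (neg_nonpos.2 (mul_nonneg hK (sub_nonneg.2 hr.1.le)))
    calc Real.exp (-(K * (r - a))) * (-(K * 1)) * y r + Real.exp (-(K * (r - a))) * y' r
        = Real.exp (-(K * (r - a))) * (y' r - K * y r) := by ring
      _ ≤ Real.exp (-(K * (r - a))) * F r := by
        gcongr
        linarith [hle r hr]
      _ ≤ F r := mul_le_of_le_one_left (hF₀ r hr) hdecay
  rw [sub_self, mul_zero, neg_zero, Real.exp_zero, one_mul, Real.exp_neg] at hweighted
  rw [← inv_mul_le_iff₀ (Real.exp_pos _)]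
  linarith

theorem le_exp_mul_add_integral_of_neg_deriv_le (hK : 0 ≤ K) (hab : a ≤ b)
    (hy : ContinuousOn y (Icc a b)) (hy' : ∀ r ∈ Ioo a b, HasDerivAt y (y' r) r)
    (hF : IntegrableOn F (Icc a b)) (hF₀ : ∀ r ∈ Ioo a b, 0 ≤ F r)
    (hle : ∀ r ∈ Ioo a b, -y' r ≤ K * y r + F r) :
    y a ≤ Real.exp (K * (b - a)) * (y b + ∫ r in a..b, F r) := by
  have hIcc {r : ℝ} (hr : r ∈ Icc (-b) (-a)) : -r ∈ Icc a b :=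
    ⟨le_neg_of_le_neg hr.2, neg_le_of_neg_le hr.1⟩
  have hIoo {r : ℝ} (hr : r ∈ Ioo (-b) (-a)) : -r ∈ Ioo a b :=
    ⟨lt_neg_of_lt_neg hr.2, neg_lt_of_neg_lt hr.1⟩
  have hreflected := le_exp_mul_add_integral_of_deriv_le (y := fun r => y (-r))
    (y' := fun r => -y' (-r)) (F := fun r => F (-r)) hK (neg_le_neg hab)
    (hy.comp continuousOn_neg fun _ => hIcc)
    (fun r hr => by
      simpa [Function.comp_def] using (hy' (-r) (hIoo hr)).scomp r (hasDerivAt_neg r))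
    (by simpa using hF.comp_neg) (fun r hr => hF₀ (-r) (hIoo hr))
    (fun r hr => hle (-r) (hIoo hr))
  simpa only [neg_neg, intervalIntegral.integral_comp_neg, sub_neg_eq_add, neg_add_eq_sub]
    using hreflected

theorem le_exp_mul_add_integral_of_abs_deriv_le (hK : 0 ≤ K)
    (hy : ContinuousOn y (uIcc s t)) (hy' : ∀ r ∈ uIoo s t, HasDerivAt y (y' r) r)
    (hF : IntegrableOn F (uIcc s t)) (hF₀ : ∀ r ∈ uIoo s t, 0 ≤ F r)
    (hle : ∀ r ∈ uIoo s t, |y' r| ≤ K * y r + F r) :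
    y t ≤ Real.exp (K * |t - s|) * (y s + ∫ r in min s t..max s t, F r) := by
  rcases le_total s t with hst | hts
  · rw [uIcc_of_le hst] at hy hF
    rw [uIoo_of_le hst] at hy' hF₀ hle
    rw [abs_of_nonneg (sub_nonneg.2 hst), min_eq_left hst, max_eq_right hst]
    exact le_exp_mul_add_integral_of_deriv_le hK hst hy hy' hF hF₀
      fun r hr => (le_abs_self _).trans (hle r hr)
  · rw [uIcc_of_ge hts] at hy hF
    rw [uIoo_of_ge hts] at hy' hF₀ hle
    rw [abs_of_nonpos (sub_nonpos.2 hts), neg_sub, min_eq_right hts, max_eq_left hts]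
    exact le_exp_mul_add_integral_of_neg_deriv_le hK hts hy hy' hF hF₀
      fun r hr => (neg_le_abs _).trans (hle r hr)

theorem sqrt_le_exp_mul_add_integral_of_abs_deriv_le (hK : 0 ≤ K)
    (hE : ContinuousOn E (uIcc s t)) (hE₀ : ∀ r ∈ uIoo s t, 0 ≤ E r)
    (hE' : ∀ r ∈ uIoo s t, HasDerivAt E (E' r) r)
    (hF : IntegrableOn F (uIcc s t)) (hF₀ : ∀ r ∈ uIoo s t, 0 ≤ F r)
    (hle : ∀ r ∈ uIoo s t, |E' r| ≤ 2 * K * E r + 2 * (√(E r) * F r)) :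
    √(E t) ≤ Real.exp (K * |t - s|) * (√(E s) + ∫ r in min s t..max s t, F r) := by
  -- `√E` need not be differentiable where `E = 0`, so work with `√(E + δ)` and let `δ → 0⁺`.
  have hregularized (δ : ℝ) (hδ : 0 < δ) : √(E t + δ) ≤
      Real.exp (K * |t - s|) * (√(E s + δ) + ∫ r in min s t..max s t, F r) := by
    refine le_exp_mul_add_integral_of_abs_deriv_le (y := fun r => √(E r + δ))
      (y' := fun r => E' r / (2 * √(E r + δ))) hK (hE.add continuousOn_const).sqrt
      (fun r hr => ((hE' r hr).add_const δ).sqrt (by linarith [hE₀ r hr])) hF hF₀ fun r hr => ?_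
    have hpos : 0 < E r + δ := by linarith [hE₀ r hr]
    have hroot : 0 < √(E r + δ) := Real.sqrt_pos.2 hpos
    rw [abs_div, abs_of_pos (mul_pos two_pos hroot), div_le_iff₀ (mul_pos two_pos hroot)]
    calc |E' r| ≤ 2 * K * E r + 2 * (√(E r) * F r) := hle r hr
      _ ≤ 2 * K * (E r + δ) + 2 * (√(E r + δ) * F r) := by
        have := hF₀ r hr
        gcongr <;> linarith
      _ = (K * √(E r + δ) + F r) * (2 * √(E r + δ)) := by
        nth_rewrite 1 [← Real.mul_self_sqrt hpos.le]
        ring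
  have hlim {c : ℝ → ℝ} (hc : Continuous c) :
      Filter.Tendsto c (nhdsWithin 0 (Ioi 0)) (nhds (c 0)) := hc.continuousWithinAt
  simpa only [add_zero] using le_of_tendsto_of_tendsto
    (hlim (c := fun δ => √(E t + δ)) (by fun_prop))
    (hlim (c := fun δ => Real.exp (K * |t - s|) *
      (√(E s + δ) + ∫ r in min s t..max s t, F r)) (by fun_prop))
    (eventually_mem_nhdsWithin.mono hregularized)

end Gronwall

section ParametricIntegral

open Set

variable {X G : Type*} [TopologicalSpace X] [T2Space X] [MeasurableSpace X]
  [OpensMeasurableSpace X] {μ : Measure X} [IsFiniteMeasureOnCompacts μ]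
  [NormedAddCommGroup G] [NormedSpace ℝ G] [SecondCountableTopologyEither X G]

theorem hasDerivAt_integral_of_compact_support {F F' : ℝ → X → G} {s : Set ℝ} {k : Set X}
    {t : ℝ} (hs : IsOpen s) (hk : IsCompact k) (hF : ContinuousOn F.uncurry (s ×ˢ univ))
    (hF' : ContinuousOn F'.uncurry (s ×ˢ univ)) (hFk : ∀ r ∈ s, ∀ x ∉ k, F r x = 0)
    (hderiv : ∀ r ∈ s, ∀ x, HasDerivAt (F · x) (F' r x) r) (ht : t ∈ s) :
    HasDerivAt (fun r => ∫ x, F r x ∂μ) (∫ x, F' t x ∂μ) t := by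
  obtain ⟨ε, hε, hεs⟩ := Metric.nhds_basis_closedBall.mem_iff.1 (hs.mem_nhds ht)
  obtain ⟨B, hB⟩ := ((isCompact_closedBall t ε).prod hk).exists_bound_of_continuousOn
    (hF'.mono (prod_mono hεs (subset_univ k)))
  have hslice {H : ℝ → X → G} (hH : ContinuousOn H.uncurry (s ×ˢ univ)) {r : ℝ} (hr : r ∈ s) :
      Continuous (H r) :=
    hH.comp_continuous (by fun_prop : Continuous fun x => (r, x)) fun _ => ⟨hr, mem_univ _⟩
  have hF'k {r : ℝ} (hr : r ∈ s) {x : X} (hx : x ∉ k) : F' r x = 0 :=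
    (hderiv r hr x).unique <| (hasDerivAt_const r 0).congr_of_eventuallyEq <|
      Filter.eventually_of_mem (hs.mem_nhds hr) fun r hr => hFk r hr x hx
  refine (hasDerivAt_integral_of_dominated_loc_of_deriv_le
    (Metric.closedBall_mem_nhds t hε) (bound := k.indicator fun _ => B)
    (Filter.eventually_of_mem (hs.mem_nhds ht) fun r hr => (hslice hF hr).aestronglyMeasurable)
    ((hslice hF ht).integrable_of_hasCompactSupport (.intro hk (hFk t ht)))
    (hslice hF' ht).aestronglyMeasurable (.of_forall fun x r hr => ?_)
    ((integrable_indicator_iff hk.measurableSet).2 (integrableOn_const hk.measure_ne_top))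
    (.of_forall fun x r hr => hderiv r (hεs hr) x)).2
  by_cases hx : x ∈ k
  · simpa only [indicator_of_mem hx, Function.uncurry_apply_pair] using hB (r, x) ⟨hr, hx⟩
  · rw [hF'k (hεs hr) hx, indicator_of_notMem hx, norm_zero]

end ParametricIntegral

theorem integral_fderiv_apply_eq_zero {E G : Type*} [NormedAddCommGroup E] [NormedSpace ℝ E]
    [FiniteDimensional ℝ E] [MeasurableSpace E] [BorelSpace E] {μ : Measure E}
    [μ.IsAddHaarMeasure] [NormedAddCommGroup G] [NormedSpace ℝ G] {w : E → G} {e : E}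
    (hw : Differentiable ℝ w) (hw_int : Integrable w μ)
    (hw'_int : Integrable (fun x => fderiv ℝ w x e) μ) : ∫ x, fderiv ℝ w x e ∂μ = 0 := by
  simpa using integral_smul_fderiv_eq_neg_fderiv_smul_of_integrable (f := fun _ => (1 : ℝ))
    (v := e) (by simp) (by simpa using hw'_int) (by simpa using hw_int)
    (fun _ _ => differentiableAt_const _) fun x _ => hw x

theorem integral_abs_mul_abs_le_sqrt_mul_eLpNorm {X : Type*} [MeasurableSpace X]
    {μ : Measure X} {φ ψ : X → ℝ} (hφ : MemLp φ 2 μ) (hψ : MemLp ψ 2 μ) :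
    ∫ x, |φ x| * |ψ x| ∂μ ≤ √(∫ x, φ x ^ 2 ∂μ) * (eLpNorm ψ 2 μ).toReal := by
  have hHolder := integral_mul_norm_le_Lp_mul_Lq (μ := μ) Real.HolderConjugate.two_two
    (f := φ) (g := ψ) (by simpa using hφ) (by simpa using hψ)
  rw [hψ.eLpNorm_eq_integral_rpow_norm two_ne_zero ENNReal.ofNat_ne_top,
    ENNReal.toReal_ofReal (by positivity), Real.sqrt_eq_rpow]
  simpa using hHolder

section QuadraticForm

variable {ι : Type*} [Fintype ι]

theorem hasDerivAt_quadForm {G : ι → ι → ℝ → ℝ} {G' : ι → ι → ℝ} {ξ : ι → ℝ → ℝ}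
    {ξ' : ι → ℝ} {t : ℝ} (hG : ∀ α β, HasDerivAt (G α β) (G' α β) t)
    (hξ : ∀ α, HasDerivAt (ξ α) (ξ' α) t) (hsymm : ∀ α β, G α β t = G β α t) :
    HasDerivAt (fun r => ∑ α, ∑ β, G α β r * ξ α r * ξ β r)
      ((∑ α, ∑ β, G' α β * ξ α t * ξ β t) + 2 * ∑ α, ξ' α * ∑ β, G α β t * ξ β t) t := by
  have hswap : ∑ α, ∑ β, G α β t * ξ α t * ξ' β = ∑ α, ∑ β, G α β t * ξ' α * ξ β t := by
    rw [Finset.sum_comm]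
    refine Finset.sum_congr rfl fun α _ => Finset.sum_congr rfl fun β _ => ?_
    rw [hsymm β α]
    ring
  have hfactor : ∑ α, ξ' α * ∑ β, G α β t * ξ β t = ∑ α, ∑ β, G α β t * ξ' α * ξ β t := by
    simp only [Finset.mul_sum]
    exact Finset.sum_congr rfl fun α _ => Finset.sum_congr rfl fun β _ => by ring
  refine (HasDerivAt.fun_sum fun α _ => HasDerivAt.fun_sum fun β _ =>
    ((hG α β).fun_mul (hξ α)).fun_mul (hξ β)).congr_deriv ?_
  simp only [add_mul, Finset.sum_add_distrib]
  rw [hfactor, hswap]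
  ring

theorem abs_quadForm_le {G : ι → ι → ℝ} {M : ℝ} (hG : ∀ α β, |G α β| ≤ M) (ξ : ι → ℝ) :
    |∑ α, ∑ β, G α β * ξ α * ξ β| ≤ Fintype.card ι * M * ∑ α, ξ α ^ 2 := by
  have hterm (α β : ι) : |G α β * ξ α * ξ β| ≤ M * ((ξ α ^ 2 + ξ β ^ 2) / 2) := by
    have hM : 0 ≤ M := (abs_nonneg _).trans (hG α β)
    have hamgm : |ξ α * ξ β| ≤ (ξ α ^ 2 + ξ β ^ 2) / 2 := by
      rw [abs_mul, ← sq_abs (ξ α), ← sq_abs (ξ β)]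
      linarith [two_mul_le_add_sq |ξ α| |ξ β|]
    rw [mul_assoc, abs_mul]
    gcongr
    exact hG α β
  calc |∑ α, ∑ β, G α β * ξ α * ξ β| ≤ ∑ α, ∑ β, |G α β * ξ α * ξ β| :=
        (Finset.abs_sum_le_sum_abs _ _).trans
          (Finset.sum_le_sum fun α _ => Finset.abs_sum_le_sum_abs _ _)
    _ ≤ ∑ α, ∑ β, M * ((ξ α ^ 2 + ξ β ^ 2) / 2) :=
        Finset.sum_le_sum fun α _ => Finset.sum_le_sum fun β _ => hterm α β
    _ = Fintype.card ι * M * ∑ α, ξ α ^ 2 := by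
        simp only [← Finset.mul_sum, ← Finset.sum_div, Finset.sum_add_distrib,
          Finset.sum_const, Finset.card_univ, nsmul_eq_mul]
        ring

theorem abs_two_mul_mul_le {d M : ℝ} (hd : |d| ≤ M) (x y : ℝ) :
    |2 * x * (d * y)| ≤ M * (x ^ 2 + y ^ 2) := by
  have hamgm : |2 * x * y| ≤ x ^ 2 + y ^ 2 := by
    rw [abs_mul, abs_mul, abs_two, ← sq_abs x, ← sq_abs y]
    exact two_mul_le_add_sq |x| |y|
  rw [show 2 * x * (d * y) = d * (2 * x * y) by ring, abs_mul]
  exact mul_le_mul hd hamgm (abs_nonneg _) ((abs_nonneg d).trans hd)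

theorem abs_two_mul_sum_mul_le {b : ι → ℝ} {M : ℝ} (hb : ∀ α, |b α| ≤ M) (x : ℝ) (ξ : ι → ℝ) :
    |2 * x * ∑ α, b α * ξ α| ≤ M * (Fintype.card ι * x ^ 2 + ∑ α, ξ α ^ 2) :=
  calc |2 * x * ∑ α, b α * ξ α| ≤ ∑ α, |2 * x * (b α * ξ α)| := by
        rw [Finset.mul_sum]
        exact Finset.abs_sum_le_sum_abs _ _
    _ ≤ ∑ α, M * (x ^ 2 + ξ α ^ 2) :=
        Finset.sum_le_sum fun α _ => abs_two_mul_mul_le (hb α) x (ξ α)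
    _ = M * (Fintype.card ι * x ^ 2 + ∑ α, ξ α ^ 2) := by
        simp only [← Finset.mul_sum, Finset.sum_add_distrib, Finset.sum_const,
          Finset.card_univ, nsmul_eq_mul]

end QuadraticForm

section SpaceTime

variable {n : ℕ} {U : Set (ℝ × (Fin n → ℝ))} {u w : ℝ × (Fin n → ℝ) → ℝ}
  {p : ℝ × (Fin n → ℝ)} {k : Set (Fin n → ℝ)} {s : Set ℝ} {t : ℝ} {x : Fin n → ℝ}
  {l m : WithTop ℕ∞}

theorem contDiffOn_Dt (hU : IsOpen U) (hu : ContDiffOn ℝ m u U) (hlm : l + 1 ≤ m) :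
    ContDiffOn ℝ l (Dt u) U :=
  (hu.fderiv_of_isOpen hU hlm).clm_apply contDiffOn_const

theorem contDiffOn_Dx (hU : IsOpen U) (hu : ContDiffOn ℝ m u U) (hlm : l + 1 ≤ m) (α : Fin n) :
    ContDiffOn ℝ l (Dx α u) U :=
  (hu.fderiv_of_isOpen hU hlm).clm_apply contDiffOn_const

theorem Dt_Dx_comm (hu : ContDiffAt ℝ 2 u p) (α : Fin n) : Dt (Dx α u) p = Dx α (Dt u) p := by
  have hu' : DifferentiableAt ℝ (fderiv ℝ u) p :=
    (hu.fderiv_right (m := 1) one_add_one_eq_two.le).differentiableAt one_ne_zero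
  have hsecond (e e' : ℝ × (Fin n → ℝ)) :
      fderiv ℝ (fun q => fderiv ℝ u q e) p e' = fderiv ℝ (fderiv ℝ u) p e' e := by
    simp [fderiv_clm_apply hu' (differentiableAt_const e)]
  exact (hsecond _ _).trans ((hu.isSymmSndFDerivAt (by simp) _ _).trans (hsecond _ _).symm)

theorem Dx_mul (hu : DifferentiableAt ℝ u p) (hw : DifferentiableAt ℝ w p) (α : Fin n) :
    Dx α (fun q => u q * w q) p = u p * Dx α w p + w p * Dx α u p := by
  simp [Dx, fderiv_fun_mul hu hw]

theorem hasDerivAt_Dt (hu : DifferentiableAt ℝ u (t, x)) :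
    HasDerivAt (fun r => u (r, x)) (Dt u (t, x)) t :=
  hu.hasFDerivAt.comp_hasDerivAt t ((hasDerivAt_id t).prodMk (hasDerivAt_const t x))

theorem hasFDerivAt_slice (hu : DifferentiableAt ℝ u (t, x)) :
    HasFDerivAt (fun y => u (t, y))
      ((fderiv ℝ u (t, x)).comp (ContinuousLinearMap.inr ℝ ℝ (Fin n → ℝ))) x :=
  hu.hasFDerivAt.comp x (hasFDerivAt_prodMk_right t x)

/-- Inside the space-time region `U`, the function `u` is supported over the set `k` of space.
Nothing is required outside `U`, where the equation does not constrain `u`. -/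
def SupportedOver (U : Set (ℝ × (Fin n → ℝ))) (k : Set (Fin n → ℝ))
    (u : ℝ × (Fin n → ℝ) → ℝ) : Prop :=
  ∀ p ∈ U, p.2 ∉ k → u p = 0

namespace SupportedOver

theorem fderiv_eq_zero (hu : SupportedOver U k u) (hU : IsOpen U) (hk : IsClosed k) (hp : p ∈ U)
    (hpk : p.2 ∉ k) : fderiv ℝ u p = 0 := by
  have hu₀ : u =ᶠ[nhds p] fun _ => 0 := by
    filter_upwards [hU.mem_nhds hp, (hk.isOpen_compl.preimage continuous_snd).mem_nhds hpk]
      with q hq hqk using hu q hq hqk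
  rw [hu₀.fderiv_eq, fderiv_fun_const, Pi.zero_apply]

protected theorem Dt (hu : SupportedOver U k u) (hU : IsOpen U) (hk : IsClosed k) :
    SupportedOver U k (Dt u) := fun p hp hpk => by
  rw [_root_.Dt, hu.fderiv_eq_zero hU hk hp hpk, zero_apply]

protected theorem Dx (hu : SupportedOver U k u) (hU : IsOpen U) (hk : IsClosed k) (α : Fin n) :
    SupportedOver U k (Dx α u) := fun p hp hpk => by
  rw [_root_.Dx, hu.fderiv_eq_zero hU hk hp hpk, zero_apply]

theorem mul_right (hu : SupportedOver U k u) (w : ℝ × (Fin n → ℝ) → ℝ) :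
    SupportedOver U k (fun p => u p * w p) := fun p hp hpk =>
  mul_eq_zero_of_left (hu p hp hpk) (w p)

theorem hasCompactSupport_slice (hu : SupportedOver U k u) (hk : IsCompact k)
    (ht : ∀ x, (t, x) ∈ U) : HasCompactSupport fun x => u (t, x) :=
  .intro hk fun x => hu (t, x) (ht x)

end SupportedOver

theorem continuous_slice (hu : ContinuousOn u U) (ht : ∀ x, (t, x) ∈ U) :
    Continuous fun x => u (t, x) :=
  hu.comp_continuous (by fun_prop) ht

theorem integrable_slice (hu : ContinuousOn u U) (huk : SupportedOver U k u) (hk : IsCompact k)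
    (ht : ∀ x, (t, x) ∈ U) : Integrable fun x => u (t, x) :=
  (continuous_slice hu ht).integrable_of_hasCompactSupport (huk.hasCompactSupport_slice hk ht)

theorem memLp_slice (hu : ContinuousOn u U) (huk : SupportedOver U k u) (hk : IsCompact k)
    (ht : ∀ x, (t, x) ∈ U) (q : ENNReal) : MemLp (fun x => u (t, x)) q :=
  (continuous_slice hu ht).memLp_of_hasCompactSupport (huk.hasCompactSupport_slice hk ht)

theorem continuousOn_integral_slice (hu : ContinuousOn u U) (huk : SupportedOver U k u)
    (hk : IsCompact k) (hsU : s ×ˢ Set.univ ⊆ U) :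
    ContinuousOn (fun r => ∫ x, u (r, x)) s :=
  continuousOn_integral_of_compact_support (f := fun r x => u (r, x)) hk (hu.mono hsU)
    fun r x hr => huk (r, x) (hsU ⟨hr, Set.mem_univ x⟩)

theorem hasDerivAt_integral_slice (hU : IsOpen U) (hu : ContDiffOn ℝ 1 u U)
    (huk : SupportedOver U k u) (hk : IsCompact k) (hs : IsOpen s) (hsU : s ×ˢ Set.univ ⊆ U)
    (ht : t ∈ s) : HasDerivAt (fun r => ∫ x, u (r, x)) (∫ x, Dt u (t, x)) t := by
  have hmem {r : ℝ} (hr : r ∈ s) (x : Fin n → ℝ) : (r, x) ∈ U := hsU ⟨hr, Set.mem_univ x⟩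
  exact hasDerivAt_integral_of_compact_support (F := fun r x => u (r, x))
    (F' := fun r x => Dt u (r, x)) hs hk (hu.continuousOn.mono hsU)
    ((contDiffOn_Dt hU hu (zero_add 1).le).continuousOn.mono hsU)
    (fun r hr x => huk (r, x) (hmem hr x))
    (fun r hr x => hasDerivAt_Dt
      ((hu.differentiableOn one_ne_zero).differentiableAt (hU.mem_nhds (hmem hr x)))) ht

theorem integral_Dx_eq_zero (hU : IsOpen U) (hu : ContDiffOn ℝ 1 u U)
    (huk : SupportedOver U k u) (hk : IsCompact k) (ht : ∀ x, (t, x) ∈ U) (α : Fin n) :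
    ∫ x, Dx α u (t, x) = 0 := by
  have hslice (x : Fin n → ℝ) := hasFDerivAt_slice
    ((hu.differentiableOn one_ne_zero).differentiableAt (hU.mem_nhds (ht x)))
  have hDx (x : Fin n → ℝ) :
      fderiv ℝ (fun y => u (t, y)) x (Pi.single α 1) = Dx α u (t, x) := by
    simp [(hslice x).fderiv, Dx]
  have hDx_int : Integrable fun x => Dx α u (t, x) :=
    integrable_slice (contDiffOn_Dx hU hu (zero_add 1).le α).continuousOn
      (huk.Dx hU hk.isClosed α) hk ht
  simpa only [hDx] using integral_fderiv_apply_eq_zero (μ := volume) (e := Pi.single α 1)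
    (fun x => (hslice x).differentiableAt) (integrable_slice hu.continuousOn huk hk ht)
    (by simpa only [hDx] using hDx_int)

end SpaceTime

section Energy

variable {n : ℕ} {U : Set (ℝ × (Fin n → ℝ))} {g : Fin n → Fin n → ℝ × (Fin n → ℝ) → ℝ}
  {v : ℝ × (Fin n → ℝ) → ℝ} {p : ℝ × (Fin n → ℝ)} {k : Set (Fin n → ℝ)} {s : Set ℝ} {t : ℝ}

/-- The integrand of `energy g v`. -/
noncomputable def energyDensity (g : Fin n → Fin n → ℝ × (Fin n → ℝ) → ℝ)
    (v : ℝ × (Fin n → ℝ) → ℝ) (p : ℝ × (Fin n → ℝ)) : ℝ :=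
  Dt v p ^ 2 + (∑ α, ∑ β, g α β p * Dx α v p * Dx β v p) + v p ^ 2

/-- The components of the vector field `g∇v`. -/
noncomputable def flux (g : Fin n → Fin n → ℝ × (Fin n → ℝ) → ℝ) (v : ℝ × (Fin n → ℝ) → ℝ)
    (α : Fin n) (p : ℝ × (Fin n → ℝ)) : ℝ :=
  ∑ β, g α β p * Dx β v p

/-- The principal part `∂_t²v − div(g∇v)` of the wave equation. -/
noncomputable def waveOp (g : Fin n → Fin n → ℝ × (Fin n → ℝ) → ℝ) (v : ℝ × (Fin n → ℝ) → ℝ)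
    (p : ℝ × (Fin n → ℝ)) : ℝ :=
  Dt (Dt v) p - ∑ α, Dx α (flux g v α) p

/-- The part of the time derivative of the energy density that is not a spatial divergence;
its integral is the time derivative of the energy. -/
noncomputable def energyProduction (g : Fin n → Fin n → ℝ × (Fin n → ℝ) → ℝ)
    (v : ℝ × (Fin n → ℝ) → ℝ) (p : ℝ × (Fin n → ℝ)) : ℝ :=
  2 * Dt v p * waveOp g v p + (∑ α, ∑ β, Dt (g α β) p * Dx α v p * Dx β v p)
    + 2 * v p * Dt v p

theorem contDiffOn_flux (hU : IsOpen U) (hg : ∀ α β, ContDiffOn ℝ 1 (g α β) U)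
    (hv : ContDiffOn ℝ 2 v U) (α : Fin n) : ContDiffOn ℝ 1 (flux g v α) U :=
  ContDiffOn.sum fun β _ => (hg α β).mul (contDiffOn_Dx hU hv one_add_one_eq_two.le β)

theorem contDiffOn_energyDensity (hU : IsOpen U) (hg : ∀ α β, ContDiffOn ℝ 1 (g α β) U)
    (hv : ContDiffOn ℝ 2 v U) : ContDiffOn ℝ 1 (energyDensity g v) U := by
  have hDx (α : Fin n) := contDiffOn_Dx hU hv one_add_one_eq_two.le α
  exact (((contDiffOn_Dt hU hv one_add_one_eq_two.le).pow 2).add (ContDiffOn.sum fun α _ =>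
    ContDiffOn.sum fun β _ => ((hg α β).mul (hDx α)).mul (hDx β))).add
    ((hv.of_le one_le_two).pow 2)

theorem continuousOn_waveOp (hU : IsOpen U) (hg : ∀ α β, ContDiffOn ℝ 1 (g α β) U)
    (hv : ContDiffOn ℝ 2 v U) : ContinuousOn (waveOp g v) U :=
  (contDiffOn_Dt hU (contDiffOn_Dt hU hv one_add_one_eq_two.le) (zero_add 1).le).continuousOn.sub
    (continuousOn_finsetSum _ fun α _ =>
      (contDiffOn_Dx hU (contDiffOn_flux hU hg hv α) (zero_add 1).le α).continuousOn)

namespace SupportedOver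

protected theorem energyDensity (hv : SupportedOver U k v) (hU : IsOpen U) (hk : IsClosed k) :
    SupportedOver U k (energyDensity g v) := fun p hp hpk => by
  simp [_root_.energyDensity, hv p hp hpk, hv.Dt hU hk p hp hpk,
    fun α => hv.Dx hU hk α p hp hpk]

protected theorem flux (hv : SupportedOver U k v) (hU : IsOpen U) (hk : IsClosed k) (α : Fin n) :
    SupportedOver U k (flux g v α) := fun p hp hpk => by
  simp [_root_.flux, fun β => hv.Dx hU hk β p hp hpk]

protected theorem waveOp (hv : SupportedOver U k v) (hU : IsOpen U) (hk : IsClosed k) :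
    SupportedOver U k (waveOp g v) := fun p hp hpk => by
  simp [_root_.waveOp, (hv.Dt hU hk).Dt hU hk p hp hpk,
    fun α => (hv.flux (g := g) hU hk α).Dx hU hk α p hp hpk]

end SupportedOver

theorem Dt_energyDensity_eq (hU : IsOpen U) (hg : ∀ α β, ContDiffOn ℝ 1 (g α β) U)
    (hv : ContDiffOn ℝ 2 v U) (hp : p ∈ U) (hsymm : ∀ α β, g α β p = g β α p) :
    Dt (energyDensity g v) p =
      energyProduction g v p + 2 * ∑ α, Dx α (fun q => Dt v q * flux g v α q) p := by
  have hdiff {w : ℝ × (Fin n → ℝ) → ℝ} (hw : ContDiffOn ℝ 1 w U) : DifferentiableAt ℝ w p :=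
    (hw.differentiableOn one_ne_zero).differentiableAt (hU.mem_nhds hp)
  have hDtv := hdiff (contDiffOn_Dt hU hv one_add_one_eq_two.le)
  have hquad := hasDerivAt_quadForm (fun α β => hasDerivAt_Dt (hdiff (hg α β)))
    (fun α => hasDerivAt_Dt (hdiff (contDiffOn_Dx hU hv one_add_one_eq_two.le α))) hsymm
  have hdensity : HasDerivAt (fun r => energyDensity g v (r, p.2)) _ p.1 :=
    (((hasDerivAt_Dt hDtv).fun_pow 2).fun_add hquad).fun_add
      ((hasDerivAt_Dt (hdiff (hv.of_le one_le_two))).fun_pow 2)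
  rw [(hasDerivAt_Dt (hdiff (contDiffOn_energyDensity hU hg hv))).unique hdensity]
  simp only [energyProduction, waveOp, Dt_Dx_comm (hv.contDiffAt (hU.mem_nhds hp)),
    Dx_mul hDtv (hdiff (contDiffOn_flux hU hg hv _)), Finset.sum_add_distrib, ← Finset.mul_sum,
    mul_comm (flux g v _ p)]
  simp only [flux, Nat.cast_ofNat, Nat.add_one_sub_one, pow_one]
  ring

theorem hasDerivAt_energy (hU : IsOpen U) (hg : ∀ α β, ContDiffOn ℝ 1 (g α β) U)
    (hv : ContDiffOn ℝ 2 v U) (hvk : SupportedOver U k v) (hk : IsCompact k) (hs : IsOpen s)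
    (hsU : s ×ˢ Set.univ ⊆ U) (hsymm : ∀ α β, ∀ p ∈ s ×ˢ Set.univ, g α β p = g β α p)
    (ht : t ∈ s) : HasDerivAt (energy g v) (∫ x, energyProduction g v (t, x)) t := by
  have hmem (x : Fin n → ℝ) : (t, x) ∈ U := hsU ⟨ht, Set.mem_univ x⟩
  have hdensity := contDiffOn_energyDensity hU hg hv
  have hdensityk : SupportedOver U k (energyDensity g v) := hvk.energyDensity hU hk.isClosed
  have hcurrent (α : Fin n) : ContDiffOn ℝ 1 (fun q => Dt v q * flux g v α q) U :=
    (contDiffOn_Dt hU hv one_add_one_eq_two.le).mul (contDiffOn_flux hU hg hv α)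
  have hcurrentk (α : Fin n) : SupportedOver U k (fun q => Dt v q * flux g v α q) :=
    (hvk.Dt hU hk.isClosed).mul_right _
  have hdiv_int (α : Fin n) : Integrable fun x => Dx α (fun q => Dt v q * flux g v α q) (t, x) :=
    integrable_slice (contDiffOn_Dx hU (hcurrent α) (zero_add 1).le α).continuousOn
      ((hcurrentk α).Dx hU hk.isClosed α) hk hmem
  have hDt_int : Integrable fun x => Dt (energyDensity g v) (t, x) :=
    integrable_slice (contDiffOn_Dt hU hdensity (zero_add 1).le).continuousOn
      (hdensityk.Dt hU hk.isClosed) hk hmem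
  refine (hasDerivAt_integral_slice hU hdensity hdensityk hk hs hsU ht).congr_deriv ?_
  calc ∫ x, Dt (energyDensity g v) (t, x)
      = ∫ x, (Dt (energyDensity g v) (t, x)
          - 2 * ∑ α, Dx α (fun q => Dt v q * flux g v α q) (t, x)) := by
        rw [integral_sub hDt_int ((integrable_finsetSum _ fun α _ => hdiv_int α).const_mul 2),
          integral_const_mul, integral_finsetSum _ fun α _ => hdiv_int α,
          Finset.sum_eq_zero fun α _ =>
            integral_Dx_eq_zero hU (hcurrent α) (hcurrentk α) hk hmem α,
          mul_zero, sub_zero]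
    _ = ∫ x, energyProduction g v (t, x) := by
        refine integral_congr_ae (.of_forall fun x => ?_)
        exact sub_eq_of_eq_add
          (Dt_energyDensity_eq hU hg hv (hmem x) fun α β => hsymm α β _ ⟨ht, Set.mem_univ x⟩)

theorem continuousOn_energy (hU : IsOpen U) (hg : ∀ α β, ContDiffOn ℝ 1 (g α β) U)
    (hv : ContDiffOn ℝ 2 v U) (hvk : SupportedOver U k v) (hk : IsCompact k)
    (hsU : s ×ˢ Set.univ ⊆ U) : ContinuousOn (energy g v) s :=
  continuousOn_integral_slice (contDiffOn_energyDensity hU hg hv).continuousOn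
    (hvk.energyDensity hU hk.isClosed) hk hsU

theorem energy_nonneg (hg : ∀ x (ξ : Fin n → ℝ), 0 ≤ ∑ α, ∑ β, g α β (t, x) * ξ α * ξ β) :
    0 ≤ energy g v t :=
  integral_nonneg fun x => add_nonneg (add_nonneg (sq_nonneg _) (hg x _)) (sq_nonneg _)

theorem sq_add_sum_sq_add_sq_le_mul_energyDensity {C : ℝ} (hC : 0 < C)
    (hell : ∀ ξ : Fin n → ℝ, C * ∑ α, ξ α ^ 2 ≤ ∑ α, ∑ β, g α β p * ξ α * ξ β) :
    Dt v p ^ 2 + (∑ α, Dx α v p ^ 2) + v p ^ 2 ≤ (1 + C⁻¹) * energyDensity g v p := by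
  have hDx : ∑ α, Dx α v p ^ 2 ≤ C⁻¹ * ∑ α, ∑ β, g α β p * Dx α v p * Dx β v p :=
    (le_inv_mul_iff₀ hC).2 (hell _)
  have hquad : 0 ≤ ∑ α, ∑ β, g α β p * Dx α v p * Dx β v p :=
    (by positivity : 0 ≤ C * ∑ α, Dx α v p ^ 2).trans (hell _)
  have hrest : 0 ≤ C⁻¹ * (Dt v p ^ 2 + v p ^ 2) := by positivity
  rw [energyDensity]
  linarith

/-- The exponential growth rate in the energy estimate for a metric with lower ellipticity
constant `C` and for coefficients bounded by `M`. -/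
noncomputable def energyRate (n : ℕ) (C M : ℝ) : ℝ :=
  (1 + (n + 3) * M) * (1 + C⁻¹) / 2

theorem energyRate_pos {C M : ℝ} (hC : 0 < C) (hM : 0 ≤ M) : 0 < energyRate n C M := by
  unfold energyRate
  positivity

variable {C M : ℝ} {b₀ c f : ℝ × (Fin n → ℝ) → ℝ} {b : Fin n → ℝ × (Fin n → ℝ) → ℝ}

theorem abs_energyProduction_le (hC : 0 < C)
    (hell : ∀ ξ : Fin n → ℝ, C * ∑ α, ξ α ^ 2 ≤ ∑ α, ∑ β, g α β p * ξ α * ξ β)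
    (hDtg : ∀ α β, |Dt (g α β) p| ≤ M) (hb₀ : |b₀ p| ≤ M) (hb : ∀ α, |b α p| ≤ M)
    (hc : |c p| ≤ M)
    (hpde : waveOp g v p + b₀ p * Dt v p + (∑ α, b α p * Dx α v p) + c p * v p = f p) :
    |energyProduction g v p| ≤
      2 * energyRate n C M * energyDensity g v p + 2 * (|Dt v p| * |f p|) := by
  have hM : 0 ≤ M := (abs_nonneg _).trans hb₀
  have hsource : |2 * Dt v p * f p| = 2 * (|Dt v p| * |f p|) := by
    rw [abs_mul, abs_mul, abs_two, mul_assoc]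
  have hsplit : energyProduction g v p =
      2 * Dt v p * f p - 2 * Dt v p * (b₀ p * Dt v p) - 2 * Dt v p * ∑ α, b α p * Dx α v p
        - 2 * Dt v p * (c p * v p) + (∑ α, ∑ β, Dt (g α β) p * Dx α v p * Dx β v p)
        + 2 * v p * (1 * Dt v p) := by
    rw [energyProduction, ← hpde]
    ring
  have hlower₀ := abs_le.1 (abs_two_mul_mul_le hb₀ (Dt v p) (Dt v p))
  have hlower := abs_le.1 (abs_two_mul_sum_mul_le hb (Dt v p) fun α => Dx α v p)
  have hpotential := abs_le.1 (abs_two_mul_mul_le hc (Dt v p) (v p))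
  have hmetric := abs_le.1 (abs_quadForm_le hDtg fun α => Dx α v p)
  have hmass := abs_le.1 (abs_two_mul_mul_le abs_one.le (v p) (Dt v p))
  rw [Fintype.card_fin] at hlower hmetric
  have hsource' := abs_le.1 hsource.le
  calc |energyProduction g v p|
      ≤ (1 + (n + 3) * M) * (Dt v p ^ 2 + (∑ α, Dx α v p ^ 2) + v p ^ 2)
          + 2 * (|Dt v p| * |f p|) := by
        have hDx' : 0 ≤ (1 + 2 * M) * ∑ α, Dx α v p ^ 2 := by positivity
        have hv' : 0 ≤ (n + 2) * M * v p ^ 2 := by positivity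
        rw [hsplit, abs_le]
        constructor <;> linarith
    _ ≤ (1 + (n + 3) * M) * ((1 + C⁻¹) * energyDensity g v p) + 2 * (|Dt v p| * |f p|) := by
        gcongr
        exact sq_add_sum_sq_add_sq_le_mul_energyDensity hC hell
    _ = 2 * energyRate n C M * energyDensity g v p + 2 * (|Dt v p| * |f p|) := by
        rw [energyRate]
        ring

theorem memLp_source (hU : IsOpen U) (hg : ∀ α β, ContDiffOn ℝ 1 (g α β) U)
    (hv : ContDiffOn ℝ 2 v U) (hvk : SupportedOver U k v) (hk : IsCompact k)
    (ht : ∀ x, (t, x) ∈ U) (hb₀ : ∀ x, |b₀ (t, x)| ≤ M) (hb : ∀ α x, |b α (t, x)| ≤ M)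
    (hc : ∀ x, |c (t, x)| ≤ M) (hf : AEStronglyMeasurable fun x => f (t, x))
    (hpde : ∀ x, waveOp g v (t, x) + b₀ (t, x) * Dt v (t, x)
      + (∑ α, b α (t, x) * Dx α v (t, x)) + c (t, x) * v (t, x) = f (t, x)) (q : ENNReal) :
    MemLp (fun x => f (t, x)) q := by
  have hDt : ContinuousOn (Dt v) U := (contDiffOn_Dt hU hv one_add_one_eq_two.le).continuousOn
  have hDx (α : Fin n) : ContinuousOn (Dx α v) U :=
    (contDiffOn_Dx hU hv one_add_one_eq_two.le α).continuousOn
  have hbound_cont : ContinuousOn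
      (fun p => |waveOp g v p| + M * |Dt v p| + (∑ α, M * |Dx α v p|) + M * |v p|) U :=
    (((continuousOn_waveOp hU hg hv).abs.add (hDt.abs.const_mul M)).add
      (continuousOn_finsetSum _ fun α _ => (hDx α).abs.const_mul M)).add
      (hv.continuousOn.abs.const_mul M)
  have hbound_supp : SupportedOver U k
      fun p => |waveOp g v p| + M * |Dt v p| + (∑ α, M * |Dx α v p|) + M * |v p| := by
    intro p hp hpk
    simp [hvk p hp hpk, hvk.Dt hU hk.isClosed p hp hpk, hvk.waveOp hU hk.isClosed p hp hpk,
      fun α => hvk.Dx hU hk.isClosed α p hp hpk]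
  refine (memLp_slice hbound_cont hbound_supp hk ht q).mono hf (.of_forall fun x => ?_)
  have hmul {d : ℝ} (hd : |d| ≤ M) (y : ℝ) : |d * y| ≤ M * |y| := by
    rw [abs_mul]
    gcongr
  calc ‖f (t, x)‖
      ≤ |waveOp g v (t, x)| + |b₀ (t, x) * Dt v (t, x)|
          + |∑ α, b α (t, x) * Dx α v (t, x)| + |c (t, x) * v (t, x)| := by
        rw [← hpde x, Real.norm_eq_abs]
        exact (abs_add_le _ _).trans (add_le_add_left (abs_add_three _ _ _) _)
    _ ≤ |waveOp g v (t, x)| + M * |Dt v (t, x)| + (∑ α, M * |Dx α v (t, x)|)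
          + M * |v (t, x)| :=
        add_le_add (add_le_add (add_le_add_right (hmul (hb₀ x) _) _)
          ((Finset.abs_sum_le_sum_abs _ _).trans
            (Finset.sum_le_sum fun α _ => hmul (hb α x) _))) (hmul (hc x) _)
    _ ≤ _ := le_abs_self _

theorem abs_integral_energyProduction_le (hU : IsOpen U)
    (hg : ∀ α β, ContDiffOn ℝ 1 (g α β) U) (hv : ContDiffOn ℝ 2 v U)
    (hvk : SupportedOver U k v) (hk : IsCompact k) (ht : ∀ x, (t, x) ∈ U) (hC : 0 < C)
    (hell : ∀ x (ξ : Fin n → ℝ),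
      C * ∑ α, ξ α ^ 2 ≤ ∑ α, ∑ β, g α β (t, x) * ξ α * ξ β)
    (hDtg : ∀ α β x, |Dt (g α β) (t, x)| ≤ M) (hb₀ : ∀ x, |b₀ (t, x)| ≤ M)
    (hb : ∀ α x, |b α (t, x)| ≤ M) (hc : ∀ x, |c (t, x)| ≤ M)
    (hf : AEStronglyMeasurable fun x => f (t, x))
    (hpde : ∀ x, waveOp g v (t, x) + b₀ (t, x) * Dt v (t, x)
      + (∑ α, b α (t, x) * Dx α v (t, x)) + c (t, x) * v (t, x) = f (t, x)) :
    |∫ x, energyProduction g v (t, x)| ≤ 2 * energyRate n C M * energy g v t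
      + 2 * (√(energy g v t) * (eLpNorm (fun x => f (t, x)) 2).toReal) := by
  have hDt : MemLp (fun x => Dt v (t, x)) 2 :=
    memLp_slice (contDiffOn_Dt hU hv one_add_one_eq_two.le).continuousOn
      (hvk.Dt hU hk.isClosed) hk ht 2
  have hf₂ : MemLp (fun x => f (t, x)) 2 := memLp_source hU hg hv hvk hk ht hb₀ hb hc hf hpde 2
  have hdensity_int : Integrable fun x => energyDensity g v (t, x) :=
    integrable_slice (contDiffOn_energyDensity hU hg hv).continuousOn
      (hvk.energyDensity hU hk.isClosed) hk ht
  have hpower_int : Integrable fun x => |Dt v (t, x)| * |f (t, x)| := hDt.abs.integrable_mul hf₂.abs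
  have hbound_int : Integrable fun x =>
      2 * energyRate n C M * energyDensity g v (t, x) + 2 * (|Dt v (t, x)| * |f (t, x)|) :=
    (hdensity_int.const_mul _).add (hpower_int.const_mul 2)
  have hDt_le : ∫ x, Dt v (t, x) ^ 2 ≤ energy g v t :=
    integral_mono hDt.integrable_sq hdensity_int fun x => by
      have hquad : 0 ≤ C * ∑ α, Dx α v (t, x) ^ 2 := by positivity
      exact le_add_of_le_of_nonneg (le_add_of_nonneg_right (hquad.trans (hell x _))) (sq_nonneg _)
  calc |∫ x, energyProduction g v (t, x)|
      ≤ ∫ x, (2 * energyRate n C M * energyDensity g v (t, x)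
          + 2 * (|Dt v (t, x)| * |f (t, x)|)) := by
        rw [← Real.norm_eq_abs]
        exact norm_integral_le_of_norm_le hbound_int (.of_forall fun x =>
          abs_energyProduction_le hC (hell x) (fun α β => hDtg α β x) (hb₀ x)
            (fun α => hb α x) (hc x) (hpde x))
    _ = 2 * energyRate n C M * energy g v t + 2 * ∫ x, |Dt v (t, x)| * |f (t, x)| := by
        rw [integral_add (hdensity_int.const_mul _) (hpower_int.const_mul 2),
          integral_const_mul, integral_const_mul]
        rfl
    _ ≤ _ := by
        gcongr
        exact (integral_abs_mul_abs_le_sqrt_mul_eLpNorm hDt hf₂).trans (by gcongr)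

theorem stmt_6_general {s t : ℝ} (hC : 0 < C) (hU : IsOpen U)
    (hstU : Set.uIcc s t ×ˢ Set.univ ⊆ U) (hg : ∀ α β, ContDiffOn ℝ 1 (g α β) U)
    (hsymm : ∀ α β, ∀ p ∈ Set.uIcc s t ×ˢ Set.univ, g α β p = g β α p)
    (hell : ∀ p ∈ Set.uIcc s t ×ˢ Set.univ, ∀ ξ : Fin n → ℝ,
      C * ∑ α, ξ α ^ 2 ≤ ∑ α, ∑ β, g α β p * ξ α * ξ β)
    (hDtg : ∀ α β, ∀ p ∈ Set.uIcc s t ×ˢ Set.univ, |Dt (g α β) p| ≤ M)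
    (hcoeff : ∀ p ∈ Set.uIcc s t ×ˢ Set.univ, |b₀ p| ≤ M ∧ (∀ α, |b α p| ≤ M) ∧ |c p| ≤ M)
    (hf : ∀ τ ∈ Set.uIcc s t, AEStronglyMeasurable fun x => f (τ, x))
    (hf_int : IntegrableOn (fun τ => (eLpNorm (fun x => f (τ, x)) 2).toReal) (Set.uIcc s t))
    (hv : ContDiffOn ℝ 2 v U) (hk : IsCompact k) (hvk : SupportedOver U k v)
    (hpde : ∀ p ∈ Set.uIcc s t ×ˢ Set.univ,
      waveOp g v p + b₀ p * Dt v p + (∑ α, b α p * Dx α v p) + c p * v p = f p) :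
    √(energy g v t) ≤ Real.exp (energyRate n C M * |t - s|) *
      (√(energy g v s) + ∫ τ in min s t..max s t, (eLpNorm (fun x => f (τ, x)) 2).toReal) := by
  have hIcc {τ : ℝ} (hτ : τ ∈ Set.uIoo s t) : τ ∈ Set.uIcc s t := Set.uIoo_subset_uIcc_self hτ
  have hslab {τ : ℝ} (hτ : τ ∈ Set.uIoo s t) (x : Fin n → ℝ) :
      (τ, x) ∈ Set.uIcc s t ×ˢ Set.univ := ⟨hIcc hτ, Set.mem_univ x⟩
  have hslab_subset : Set.uIoo s t ×ˢ Set.univ ⊆ Set.uIcc s t ×ˢ (Set.univ : Set (Fin n → ℝ)) :=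
    Set.prod_mono Set.uIoo_subset_uIcc_self subset_rfl
  have hM : 0 ≤ M := (abs_nonneg _).trans (hcoeff (s, 0) ⟨Set.left_mem_uIcc, Set.mem_univ _⟩).1
  refine sqrt_le_exp_mul_add_integral_of_abs_deriv_le (energyRate_pos hC hM).le
    (continuousOn_energy hU hg hv hvk hk hstU)
    (fun τ hτ => energy_nonneg fun x ξ =>
      (by positivity : 0 ≤ C * ∑ α, ξ α ^ 2).trans (hell _ (hslab hτ x) ξ))
    (fun τ hτ => hasDerivAt_energy hU hg hv hvk hk isOpen_Ioo (hslab_subset.trans hstU)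
      (fun α β p hp => hsymm α β p (hslab_subset hp)) hτ)
    hf_int (fun _ _ => ENNReal.toReal_nonneg) fun τ hτ => ?_
  exact abs_integral_energyProduction_le hU hg hv hvk hk (fun x => hstU (hslab hτ x)) hC
    (fun x => hell _ (hslab hτ x)) (fun α β x => hDtg α β _ (hslab hτ x))
    (fun x => (hcoeff _ (hslab hτ x)).1) (fun α x => (hcoeff _ (hslab hτ x)).2.1 α)
    (fun x => (hcoeff _ (hslab hτ x)).2.2) (hf τ (hIcc hτ)) fun x => hpde _ (hslab hτ x)

end Energy

/-- Inhomogeneous energy estimate: for a solution `v` of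
`∂_t²v − Σ ∂_α(g^{αβ}∂_β v) + b⁰∂_t v + Σ b^α∂_α v + c v = f`, one has
`E(t,v)^{1/2} ≤ e^{K|t−s|}(E(s,v)^{1/2} + ∫ ‖f(τ,·)‖_{L²} dτ)` with `K` depending only
on `n, T, C₁, C₂, M`. -/
theorem stmt_6 (n : ℕ) (hn : 1 ≤ n) (T C₁ C₂ M : ℝ)
    (hT : 0 < T) (hC₁ : 0 < C₁) (hC₂ : 0 < C₂) (hM : 0 < M) :
    ∃ K : ℝ, 0 < K ∧
      ∀ (U : Set (ℝ × (Fin n → ℝ))), IsOpen U →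
        Set.Icc (-T) T ×ˢ (Set.univ : Set (Fin n → ℝ)) ⊆ U →
      ∀ g : Fin n → Fin n → ℝ × (Fin n → ℝ) → ℝ,
        (∀ α β, ContDiffOn ℝ 1 (g α β) U) →
        (∀ α β p, g α β p = g β α p) →
        (∀ p ∈ Set.Icc (-T) T ×ˢ (Set.univ : Set (Fin n → ℝ)), ∀ ξ : Fin n → ℝ,
          C₁ * (∑ α, (ξ α) ^ 2) ≤ (∑ α, ∑ β, g α β p * ξ α * ξ β) ∧
          (∑ α, ∑ β, g α β p * ξ α * ξ β) ≤ C₂ * (∑ α, (ξ α) ^ 2)) →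
        (∀ α β, ∀ p ∈ Set.Icc (-T) T ×ˢ (Set.univ : Set (Fin n → ℝ)),
          |Dt (g α β) p| ≤ M ∧ ∀ μ, |Dx μ (g α β) p| ≤ M) →
      ∀ (b0 : ℝ × (Fin n → ℝ) → ℝ) (b : Fin n → ℝ × (Fin n → ℝ) → ℝ)
        (c : ℝ × (Fin n → ℝ) → ℝ),
        Measurable b0 → (∀ α, Measurable (b α)) → Measurable c →
        (∀ p ∈ Set.Icc (-T) T ×ˢ (Set.univ : Set (Fin n → ℝ)),
          |b0 p| ≤ M ∧ (∀ α, |b α p| ≤ M) ∧ |c p| ≤ M) →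
      ∀ f : ℝ × (Fin n → ℝ) → ℝ, Continuous f →
        IntegrableOn (fun τ => (eLpNorm (fun x => f (τ, x)) 2 volume).toReal)
          (Set.Icc (-T) T) →
      ∀ v : ℝ × (Fin n → ℝ) → ℝ, ContDiffOn ℝ 2 v U →
        (∃ R : ℝ, 0 < R ∧ ∀ (t : ℝ) (x : Fin n → ℝ), R ≤ ‖x‖ → v (t, x) = 0) →
        (∀ p ∈ Set.Icc (-T) T ×ˢ (Set.univ : Set (Fin n → ℝ)),
          Dt (Dt v) p - (∑ α, Dx α (fun q => ∑ β, g α β q * Dx β v q) p)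
            + b0 p * Dt v p + (∑ α, b α p * Dx α v p) + c p * v p = f p) →
      ∀ s ∈ Set.Icc (-T) T, ∀ t ∈ Set.Icc (-T) T,
        Real.sqrt (energy g v t)
          ≤ Real.exp (K * |t - s|) *
              (Real.sqrt (energy g v s)
                + ∫ τ in min s t..max s t,
                    (eLpNorm (fun x => f (τ, x)) 2 volume).toReal) := by
  refine ⟨energyRate n C₁ M, energyRate_pos hC₁ hM.le, fun U hU hTU g hg hsymm hell hDg b0 b c
    _ _ _ hcoeff f hf hf_int v hv ⟨R, _, hvR⟩ hpde s hs t ht => ?_⟩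
  have hst : Set.uIcc s t ⊆ Set.Icc (-T) T := Set.uIcc_subset_Icc hs ht
  have hslab : Set.uIcc s t ×ˢ (Set.univ : Set (Fin n → ℝ)) ⊆ Set.Icc (-T) T ×ˢ Set.univ :=
    Set.prod_mono hst subset_rfl
  have hvk : SupportedOver U (Metric.closedBall 0 R) v := fun p _ hpR =>
    hvR p.1 p.2 (le_of_not_ge (mt mem_closedBall_zero_iff.2 hpR))
  exact stmt_6_general hC₁ hU (hslab.trans hTU) hg (fun α β p _ => hsymm α β p)
    (fun p hp ξ => (hell p (hslab hp) ξ).1) (fun α β p hp => (hDg α β p (hslab hp)).1)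
    (fun p hp => hcoeff p (hslab hp))
    (fun τ _ => (hf.comp (Continuous.prodMk_right τ)).aestronglyMeasurable) (hf_int.mono_set hst)
    hv (isCompact_closedBall 0 R) hvk fun p hp => hpde p (hslab hp)
end

section
/- Let n ≥ 1, T ∈ ℝ, let φ : ℝⁿ → ℝ be Lipschitz with φ(x) > −T for every x, and let H = (H¹,…,Hⁿ) : ℝ^{1+n} → ℝⁿ be C¹ with compact support. Then ∫_{ℝⁿ} (∫_{−T}^{φ(x)} Σ_{α=1}^n ∂_α H^α(t,x) dt) dx = − ∫_{ℝⁿ} Σ_{α=1}^n ∂_α φ(x) · H^α(φ(x), x) dx, where ∂_αφ denotes the almost-everywhere defined partial derivatives of the Lipschitz function φ (Rademacher's theorem). -/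
open MeasureTheory

/-!
The truncated primitive `G (s, x) = ∫ t in a..s, h (t, x)` is strictly differentiable, with time
derivative `h` and spatial derivative `∫ t in a..s, ∂ₓh (t, x)`. Since `φ` is Lipschitz,
`g x = G (φ x, x)` is Lipschitz with compact support, and by Rademacher's theorem the chain rule
holds almost everywhere: `∂ᵥg x = ∂ᵥφ x * h (φ x, x) + ∫ t in a..φ x, ∂ᵥh (t, x)`. The integral of
`∂ᵥg` vanishes, which is the formula for one direction `v`; summing over directions gives it for a
divergence.
-/

open scoped Filter Topology

/-- A function on a product of a time and a space variable has spatially compact support if it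
vanishes outside `S × K` for some compact `K ⊆ X`. This is encoded as compactness of the support of
the `(S → F)`-valued map `x ↦ (t ↦ h (t, x))`. -/
def HasSpatiallyCompactSupport {S X F : Type*} [TopologicalSpace X] [Zero F] (h : S × X → F) :
    Prop :=
  HasCompactSupport fun x t ↦ h (t, x)

theorem hasSpatiallyCompactSupport_of_hasCompactSupport {S X F : Type*} [TopologicalSpace S]
    [TopologicalSpace X] [R1Space X] [Zero F] {h : S × X → F} (hh : HasCompactSupport h) :
    HasSpatiallyCompactSupport h :=
  HasCompactSupport.intro (hh.isCompact.image continuous_snd) fun x hx ↦ funext fun t ↦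
    image_eq_zero_of_notMem_tsupport fun ht ↦ hx ⟨(t, x), ht, rfl⟩

theorem HasSpatiallyCompactSupport.comp_left {S X F G : Type*} [TopologicalSpace X] [Zero F]
    [Zero G] {h : S × X → F} (hc : HasSpatiallyCompactSupport h) {g : F → G} (hg : g 0 = 0) :
    HasSpatiallyCompactSupport fun p ↦ g (h p) :=
  HasCompactSupport.comp_left (g := fun (u : S → F) t ↦ g (u t)) hc (funext fun _ ↦ hg)

section LocallyLipschitz

variable {X F : Type*} [PseudoMetricSpace X] [WeaklyLocallyCompactSpace X]
  [SeminormedAddCommGroup F]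

theorem exists_lipschitzWith_of_locallyLipschitz_of_hasCompactSupport {f : X → F}
    (hf : LocallyLipschitz f) (hfc : HasCompactSupport f) : ∃ C, LipschitzWith C f := by
  obtain ⟨N, hN, hfN⟩ := exists_compact_superset hfc.isCompact
  obtain ⟨δ, hδ, hδN⟩ := hfc.isCompact.exists_thickening_subset_open isOpen_interior hfN
  obtain ⟨C, hC⟩ := (hf.locallyLipschitzOn (s := N)).exists_lipschitzOnWith_of_compact hN
  obtain ⟨M, hM⟩ := hfc.exists_bound_of_continuous hf.continuous
  have far : ∀ x ∉ N, ∀ y, ‖f y‖ ≤ M / δ * dist x y := by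
    intro x hx y
    have hM0 : 0 ≤ M := (norm_nonneg _).trans (hM y)
    by_cases hy : y ∈ tsupport f
    · have hxy : δ ≤ dist x y := by
        by_contra! hlt
        exact hx (interior_subset (hδN (Metric.mem_thickening_iff.2 ⟨y, hy, hlt⟩)))
      calc ‖f y‖ ≤ M / δ * δ := by rw [div_mul_cancel₀ _ hδ.ne']; exact hM y
        _ ≤ M / δ * dist x y := by gcongr
    · rw [image_eq_zero_of_notMem_tsupport hy, norm_zero]
      positivity
  have zero_off : ∀ x ∉ N, f x = 0 := fun x hx ↦
    image_eq_zero_of_notMem_tsupport fun h ↦ hx (interior_subset (hfN h))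
  refine ⟨(max (C : ℝ) (M / δ)).toNNReal, LipschitzWith.of_dist_le' fun x y ↦ ?_⟩
  by_cases hx : x ∈ N
  · by_cases hy : y ∈ N
    · exact (hC.dist_le_mul x hx y hy).trans (by gcongr; exact le_max_left _ _)
    · rw [zero_off y hy, dist_zero_right, dist_comm]
      exact (far y hy x).trans (by gcongr; exact le_max_right _ _)
  · rw [zero_off x hx, dist_zero_left]
    exact (far x hx y).trans (by gcongr; exact le_max_right _ _)

end LocallyLipschitz

theorem hasFDerivAt_partial_snd {𝕜 E₁ E₂ F : Type*} [NontriviallyNormedField 𝕜]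
    [NormedAddCommGroup E₁] [NormedSpace 𝕜 E₁] [NormedAddCommGroup E₂] [NormedSpace 𝕜 E₂]
    [NormedAddCommGroup F] [NormedSpace 𝕜 F] {f : E₁ × E₂ → F} {f' : E₁ × E₂ →L[𝕜] F}
    {p : E₁ × E₂} (hf : HasFDerivAt f f' p) :
    HasFDerivAt (fun y ↦ f (p.1, y)) (f' ∘L .inr 𝕜 E₁ E₂) p.2 :=
  HasFDerivAt.comp (g := f) p.2 hf (hasFDerivAt_prodMk_right p.1 p.2)

section Primitive

variable {E F : Type*} [NormedAddCommGroup E] [NormedSpace ℝ E] [NormedAddCommGroup F]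
  [NormedSpace ℝ F] {h : ℝ × E → F} {h' : ℝ × E → E →L[ℝ] F}

theorem HasSpatiallyCompactSupport.partial_fderiv (hc : HasSpatiallyCompactSupport h)
    (hd : ∀ p, HasFDerivAt (fun x ↦ h (p.1, x)) (h' p) p.2) : HasSpatiallyCompactSupport h' := by
  refine HasCompactSupport.intro' hc.isCompact (isClosed_tsupport _) fun x hx ↦ funext fun t ↦ ?_
  have hzero : (fun y ↦ h (t, y)) =ᶠ[𝓝 x] fun _ ↦ 0 :=
    (notMem_tsupport_iff_eventuallyEq.1 hx).mono fun y hy ↦ congrFun hy t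
  exact (hd (t, x)).unique ((hasFDerivAt_const 0 x).congr_of_eventuallyEq hzero)

theorem hasFDerivAt_intervalIntegral_of_continuous_partial (hh : Continuous h)
    (hh' : Continuous h') (hd : ∀ p, HasFDerivAt (fun x ↦ h (p.1, x)) (h' p) p.2) (a b : ℝ)
    (x : E) :
    HasFDerivAt (fun y ↦ ∫ t in a..b, h (t, y)) (∫ t in a..b, h' (t, x)) x := by
  have hbound : ∀ᶠ y in 𝓝 x, ∀ t ∈ Set.uIcc a b, ‖h' (t, y)‖ < ‖h' (t, x)‖ + 1 := by
    refine isCompact_uIcc.eventually_forall_of_forall_eventually fun t _ ↦ ?_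
    exact ContinuousAt.eventually_lt (f := fun z : E × ℝ ↦ ‖h' (z.2, z.1)‖)
      (g := fun z ↦ ‖h' (z.2, x)‖ + 1) (by fun_prop) (by fun_prop) (lt_add_one _)
  exact intervalIntegral.hasFDerivAt_integral_of_dominated_of_fderiv_le
    (F := fun y t ↦ h (t, y)) (F' := fun y t ↦ h' (t, y)) (bound := fun t ↦ ‖h' (t, x)‖ + 1)
    hbound (.of_forall fun y ↦ Continuous.aestronglyMeasurable (by fun_prop))
    (Continuous.intervalIntegrable (by fun_prop) _ _)
    (Continuous.aestronglyMeasurable (by fun_prop))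
    (.of_forall fun t ht y hy ↦ (hy t (Set.uIoc_subset_uIcc ht)).le)
    (Continuous.intervalIntegrable (by fun_prop) _ _)
    (.of_forall fun t _ y _ ↦ hd (t, y))

variable [CompleteSpace F]

theorem hasStrictFDerivAt_parametric_primitive (hh : Continuous h) (hh' : Continuous h')
    (hd : ∀ p, HasFDerivAt (fun x ↦ h (p.1, x)) (h' p) p.2) (a : ℝ) (p : ℝ × E) :
    HasStrictFDerivAt (fun q : ℝ × E ↦ ∫ t in a..q.1, h (t, q.2))
      ((ContinuousLinearMap.toSpanSingleton ℝ (h p)).coprod (∫ t in a..p.1, h' (t, p.2))) p := by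
  refine hasStrictFDerivAt_uncurry_coprod (f := fun s x ↦ ∫ t in a..s, h (t, x))
    (f₁ := fun s x ↦ ContinuousLinearMap.toSpanSingleton ℝ (h (s, x)))
    (f₂ := fun s x ↦ ∫ t in a..s, h' (t, x))
    (.of_forall fun q ↦ ?_)
    (.of_forall fun q ↦
      hasFDerivAt_intervalIntegral_of_continuous_partial hh hh' hd a q.1 q.2) ?_ ?_
  · have hslice : Continuous fun t ↦ h (t, q.2) := by fun_prop
    exact (hslice.integral_hasStrictDerivAt a q.1).hasDerivAt.hasFDerivAt
  · have htoSpan : Continuous fun y : F ↦ ContinuousLinearMap.toSpanSingleton ℝ y :=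
      (ContinuousLinearMap.toSpanSingletonCLE (𝕜 := ℝ)).continuous
    exact (htoSpan.comp hh).continuousAt
  · have hspatial : Continuous fun q : ℝ × E ↦ ∫ t in a..q.1, h' (t, q.2) :=
      intervalIntegral.continuous_parametric_intervalIntegral_of_continuous
        (f := fun (q : ℝ × E) t ↦ h' (t, q.2)) (by fun_prop) continuous_fst
    exact hspatial.continuousAt

variable {φ : E → ℝ}

theorem locallyLipschitz_intervalIntegral_graph (hh : Continuous h) (hh' : Continuous h')
    (hd : ∀ p, HasFDerivAt (fun x ↦ h (p.1, x)) (h' p) p.2) (hφ : LocallyLipschitz φ) (a : ℝ) :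
    LocallyLipschitz fun x ↦ ∫ t in a..φ x, h (t, x) := by
  have hprim : LocallyLipschitz fun q : ℝ × E ↦ ∫ t in a..q.1, h (t, q.2) := fun p ↦
    (hasStrictFDerivAt_parametric_primitive hh hh' hd a p).exists_lipschitzOnWith
  exact hprim.comp (hφ.prodMk LocallyLipschitz.id)

theorem hasFDerivAt_intervalIntegral_graph (hh : Continuous h) (hh' : Continuous h')
    (hd : ∀ p, HasFDerivAt (fun x ↦ h (p.1, x)) (h' p) p.2) {φ' : E →L[ℝ] ℝ} {x : E}
    (hφ : HasFDerivAt φ φ' x) (a : ℝ) :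
    HasFDerivAt (fun y ↦ ∫ t in a..φ y, h (t, y))
      (φ'.smulRight (h (φ x, x)) + ∫ t in a..φ x, h' (t, x)) x := by
  have hprim := (hasStrictFDerivAt_parametric_primitive hh hh' hd a (φ x, x)).hasFDerivAt
  exact hprim.comp (f := fun y ↦ (φ y, y)) x (hφ.prodMk (hasFDerivAt_id x))

end Primitive

section Graph

variable {X F : Type*} [TopologicalSpace X] {φ : X → ℝ} {h : ℝ × X → F}

theorem HasSpatiallyCompactSupport.comp_graph [Zero F] (hc : HasSpatiallyCompactSupport h)
    (φ : X → ℝ) : HasCompactSupport fun x ↦ h (φ x, x) :=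
  hc.mono' fun x hx ↦ subset_tsupport _ fun h0 ↦ hx (congrFun h0 (φ x))

variable [NormedAddCommGroup F]

theorem HasSpatiallyCompactSupport.intervalIntegral_graph [NormedSpace ℝ F]
    (hc : HasSpatiallyCompactSupport h) (φ : X → ℝ) (a : ℝ) :
    HasCompactSupport fun x ↦ ∫ t in a..φ x, h (t, x) := by
  refine HasCompactSupport.intro' hc.isCompact (isClosed_tsupport _) fun x hx ↦ ?_
  have hzero : ∀ t, h (t, x) = 0 := congrFun (image_eq_zero_of_notMem_tsupport hx)
  simp only [hzero, intervalIntegral.integral_zero]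

variable [MeasurableSpace X] [OpensMeasurableSpace X] {μ : Measure X}
  [IsFiniteMeasureOnCompacts μ]

theorem integrable_comp_graph (hh : Continuous h) (hc : HasSpatiallyCompactSupport h)
    (hφ : Continuous φ) : Integrable (fun x ↦ h (φ x, x)) μ :=
  Continuous.integrable_of_hasCompactSupport (by fun_prop) (hc.comp_graph φ)

theorem integrable_intervalIntegral_graph [FirstCountableTopology X] [NormedSpace ℝ F]
    (hh : Continuous h) (hc : HasSpatiallyCompactSupport h) (hφ : Continuous φ) (a : ℝ) :
    Integrable (fun x ↦ ∫ t in a..φ x, h (t, x)) μ :=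
  Continuous.integrable_of_hasCompactSupport
    (intervalIntegral.continuous_parametric_intervalIntegral_of_continuous
      (f := fun x t ↦ h (t, x)) (by fun_prop) hφ)
    (hc.intervalIntegral_graph φ a)

end Graph

section GaussGreen

variable {E : Type*} [NormedAddCommGroup E] [NormedSpace ℝ E] [MeasurableSpace E] [BorelSpace E]
  {μ : Measure E} {φ : E → ℝ} {K : NNReal}

theorem integrable_fderiv_smul_of_lipschitzWith [LocallyCompactSpace E]
    {F : Type*} [NormedAddCommGroup F] [NormedSpace ℝ F] {f : E → F} (hφ : LipschitzWith K φ)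
    (hf : Integrable f μ) (v : E) : Integrable (fun x ↦ fderiv ℝ φ x v • f x) μ := by
  refine hf.bdd_smul (K * ‖v‖) (measurable_fderiv_apply_const ℝ φ v).aestronglyMeasurable
    (.of_forall fun x ↦ ?_)
  calc ‖fderiv ℝ φ x v‖ ≤ ‖fderiv ℝ φ x‖ * ‖v‖ := ContinuousLinearMap.le_opNorm _ _
    _ ≤ K * ‖v‖ := by gcongr; exact norm_fderiv_le_of_lipschitz ℝ hφ

section Integrability

variable [IsFiniteMeasureOnCompacts μ]

theorem integrable_intervalIntegral_partial {F : Type*} [NormedAddCommGroup F] [NormedSpace ℝ F]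
    {h : ℝ × E → F} {h' : ℝ × E → E →L[ℝ] F} (hφ : Continuous φ) (hh' : Continuous h')
    (hd : ∀ p, HasFDerivAt (fun x ↦ h (p.1, x)) (h' p) p.2) (hc : HasSpatiallyCompactSupport h)
    (a : ℝ) (v : E) : Integrable (fun x ↦ ∫ t in a..φ x, h' (t, x) v) μ :=
  integrable_intervalIntegral_graph (h := fun p ↦ h' p v) (by fun_prop)
    ((hc.partial_fderiv hd).comp_left (g := fun L ↦ L v) rfl) hφ a

theorem integrable_fderiv_mul_comp_graph [LocallyCompactSpace E] {h : ℝ × E → ℝ}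
    (hφ : LipschitzWith K φ) (hh : Continuous h) (hc : HasSpatiallyCompactSupport h) (v : E) :
    Integrable (fun x ↦ fderiv ℝ φ x v * h (φ x, x)) μ :=
  integrable_fderiv_smul_of_lipschitzWith hφ (integrable_comp_graph hh hc hφ.continuous) v

end Integrability

variable [FiniteDimensional ℝ E] [μ.IsAddHaarMeasure]

theorem integral_lineDeriv_eq_zero {g : E → ℝ} (hg : LipschitzWith K g)
    (hgc : HasCompactSupport g) (v : E) : ∫ x, lineDeriv ℝ g x v ∂μ = 0 := by
  have parts := (LipschitzWith.const (1 : ℝ)).integral_lineDeriv_mul_eq (μ := μ) hg hgc (-v)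
  simpa [lineDeriv] using parts.symm

theorem integral_intervalIntegral_partial_eq_neg {h : ℝ × E → ℝ} {h' : ℝ × E → E →L[ℝ] ℝ}
    (hφ : LipschitzWith K φ) (hh : Continuous h) (hh' : Continuous h')
    (hd : ∀ p, HasFDerivAt (fun x ↦ h (p.1, x)) (h' p) p.2) (hc : HasSpatiallyCompactSupport h)
    (a : ℝ) (v : E) :
    ∫ x, (∫ t in a..φ x, h' (t, x) v) ∂μ = -∫ x, fderiv ℝ φ x v * h (φ x, x) ∂μ := by
  have hgc := hc.intervalIntegral_graph φ a
  obtain ⟨C, hC⟩ := exists_lipschitzWith_of_locallyLipschitz_of_hasCompactSupport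
    (locallyLipschitz_intervalIntegral_graph hh hh' hd hφ.locallyLipschitz a) hgc
  have chain_rule : ∀ᵐ x ∂μ, lineDeriv ℝ (fun y ↦ ∫ t in a..φ y, h (t, y)) x v =
      fderiv ℝ φ x v * h (φ x, x) + ∫ t in a..φ x, h' (t, x) v := by
    filter_upwards [hφ.ae_differentiableAt] with x hx
    have hg := hasFDerivAt_intervalIntegral_graph hh hh' hd hx.hasFDerivAt a
    have hint : IntervalIntegrable (fun t ↦ h' (t, x)) volume a (φ x) :=
      Continuous.intervalIntegrable (by fun_prop) _ _
    rw [(hg.hasLineDerivAt v).lineDeriv, add_apply,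
      ContinuousLinearMap.intervalIntegral_apply hint, ContinuousLinearMap.smulRight_apply,
      smul_eq_mul]
  refine eq_neg_of_add_eq_zero_right ?_
  rw [← integral_add (integrable_fderiv_mul_comp_graph hφ hh hc v)
    (integrable_intervalIntegral_partial hφ.continuous hh' hd hc a v),
    ← integral_congr_ae chain_rule, integral_lineDeriv_eq_zero hC hgc v]

theorem stmt_7_general {ι : Type*} [Fintype ι] {H : ι → ℝ × E → ℝ} {H' : ι → ℝ × E → E →L[ℝ] ℝ}
    (hφ : LipschitzWith K φ) (hH : ∀ i, Continuous (H i)) (hH' : ∀ i, Continuous (H' i))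
    (hd : ∀ i p, HasFDerivAt (fun x ↦ H i (p.1, x)) (H' i p) p.2)
    (hHc : ∀ i, HasSpatiallyCompactSupport (H i)) (a : ℝ) (v : ι → E) :
    ∫ x, (∫ t in a..φ x, ∑ i, H' i (t, x) (v i)) ∂μ =
      -∫ x, ∑ i, fderiv ℝ φ x (v i) * H i (φ x, x) ∂μ := by
  have slice (i x) : IntervalIntegrable (fun t ↦ H' i (t, x) (v i)) volume a (φ x) :=
    Continuous.intervalIntegrable (by fun_prop) _ _
  have interior (i) : Integrable (fun x ↦ ∫ t in a..φ x, H' i (t, x) (v i)) μ :=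
    integrable_intervalIntegral_partial hφ.continuous (hH' i) (hd i) (hHc i) a (v i)
  have boundary (i) : Integrable (fun x ↦ fderiv ℝ φ x (v i) * H i (φ x, x)) μ :=
    integrable_fderiv_mul_comp_graph hφ (hH i) (hHc i) (v i)
  calc ∫ x, (∫ t in a..φ x, ∑ i, H' i (t, x) (v i)) ∂μ
      = ∑ i, ∫ x, (∫ t in a..φ x, H' i (t, x) (v i)) ∂μ := by
        simp only [intervalIntegral.integral_finsetSum fun i _ ↦ slice i _,
          integral_finsetSum _ fun i _ ↦ interior i]
    _ = ∑ i, -∫ x, fderiv ℝ φ x (v i) * H i (φ x, x) ∂μ := Finset.sum_congr rfl fun i _ ↦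
        integral_intervalIntegral_partial_eq_neg hφ (hH i) (hH' i) (hd i) (hHc i) a (v i)
    _ = -∫ x, ∑ i, fderiv ℝ φ x (v i) * H i (φ x, x) ∂μ := by
        rw [Finset.sum_neg_distrib, integral_finsetSum _ fun i _ ↦ boundary i]

end GaussGreen

/-- Gauss–Green formula on the subgraph of a Lipschitz function: for
`φ : ℝⁿ → ℝ` Lipschitz with `φ > −T` and `H : ℝ^{1+n} → ℝⁿ` a `C¹` compactly supported
vector field,
`∫_{ℝⁿ} ∫_{−T}^{φ(x)} Σ_α ∂_α H^α(t,x) dt dx = − ∫_{ℝⁿ} Σ_α ∂_αφ(x)·H^α(φ(x),x) dx`,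
where `∂_αφ` is the a.e. defined gradient of `φ` (Rademacher). -/
theorem stmt_7 (n : ℕ) (hn : 1 ≤ n) (T : ℝ)
    (φ : (Fin n → ℝ) → ℝ) (hφ : ∃ K : NNReal, LipschitzWith K φ)
    (hφT : ∀ x, -T < φ x)
    (H : ℝ × (Fin n → ℝ) → (Fin n → ℝ)) (hH : ContDiff ℝ 1 H)
    (hHc : HasCompactSupport H) :
    (∫ x : Fin n → ℝ, ∫ t in (-T)..(φ x),
        ∑ α, fderiv ℝ (fun p => H p α) (t, x) (0, Pi.single α 1))
      = - ∫ x : Fin n → ℝ,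
          ∑ α, fderiv ℝ φ x (Pi.single α 1) * H (φ x, x) α := by
  obtain ⟨K, hK⟩ := hφ
  have hα (α) : ContDiff ℝ 1 fun p ↦ H p α := contDiff_pi.1 hH α
  exact stmt_7_general hK (H' := fun α p ↦ fderiv ℝ (fun p ↦ H p α) p ∘L .inr ℝ ℝ (Fin n → ℝ))
    (fun α ↦ (hα α).continuous)
    (fun α ↦ ((hα α).continuous_fderiv one_ne_zero).clm_comp continuous_const)
    (fun α p ↦ hasFDerivAt_partial_snd ((hα α).differentiable one_ne_zero p).hasFDerivAt)
    (fun α ↦ (hasSpatiallyCompactSupport_of_hasCompactSupport hHc).comp_left (g := fun u ↦ u α) rfl)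
    (-T) (fun α ↦ Pi.single α 1)
end
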